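/- Let C ⊆ ℝⁿ be a nonempty polyhedral set containing 0, that is, C = {x ∈ ℝⁿ : ⟨a_i,x⟩ ≤ β_i for i = 1,…,m} for some finitely many a_i ∈ ℝⁿ and β_i ∈ ℝ, and let rec(C) := {y ∈ ℝⁿ : x + t·y ∈ C for all x ∈ C and all t ≥ 0}. Suppose every nonzero y ∈ {π ∈ ℝⁿ : F(Λ₋(π)) = 0, cπ = 0, ∫_{|u|≤1} ⟨π,u⟩ F(du) ≤ ⟨π,b⟩} ∩ rec(C) belongs to N := {π : cπ = 0, F({u : ⟨π,u⟩ ≠ 0}) = 0, ⟨π,b⟩ = 0}. Then ψ achieves its infimum over C: there exists π* ∈ C ∩ C₀ with ψ(π*) ≤ ψ(π) for all π ∈ C. -/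

import Mathlib

open MeasureTheory
open scoped RealInnerProductSpace ENNReal Topology

/-- The extended-real-valued convex function `ψ` from the paper: on the budget-constraint set
`C₀ = {π | F {u | 1 + ⟨π,u⟩ < 0} = 0}` it equals
`−⟨π,b⟩ − ((p−1)/2)⟨π,cπ⟩ − ∫ (p⁻¹((1+⟨π,u⟩)₊)^p − p⁻¹ − ⟨π,u⟩·1_{|u|≤1}) dF`,
and `+∞` outside of `C₀`. -/
noncomputable def psi (n : ℕ) (p : ℝ) (F : Measure (EuclideanSpace ℝ (Fin n)))
    (b : EuclideanSpace ℝ (Fin n))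
    (c : EuclideanSpace ℝ (Fin n) →ₗ[ℝ] EuclideanSpace ℝ (Fin n))
    (π : EuclideanSpace ℝ (Fin n)) : EReal :=
  if F {u : EuclideanSpace ℝ (Fin n) | 1 + ⟪π, u⟫ < 0} = 0 then
    (((-⟪π, b⟫) - ((p - 1) / 2) * ⟪π, c π⟫ -
      ∫ u, (p⁻¹ * (max (1 + ⟪π, u⟫) 0) ^ p - p⁻¹ -
        Set.indicator {u : EuclideanSpace ℝ (Fin n) | ‖u‖ ≤ 1}
          (fun u => ⟪π, u⟫) u) ∂F : ℝ) : EReal)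
  else (⊤ : EReal)

/-!
The function `ψ` is convex and continuous on the closed convex set `C₀`, so along an asymptotic
direction `y` of one of its sublevel sets the values `ψ (t • y)`, `t ≥ 0`, stay bounded above.
Dividing by `t` and applying Fatou's lemma as `t → ∞` gives `F (Λ₋ y) = 0`, `c y = 0` and
`∫_{‖u‖ ≤ 1} ⟪y, u⟫ dF ≤ ⟪y, b⟫`. If in addition `y` is asymptotic to `C`, it is a null investment
by hypothesis, so moving back by `y` changes neither `ψ` nor membership in `C₀`; and far out in the
direction `y` it does not leave the polyhedral set `C` either, but decreases the norm. Hence the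
points of least norm in the sublevel sets of `ψ` on `C` are bounded, and `ψ` attains its minimum.
-/

open AffineSpace Filter

section Retractive

variable {E : Type*} [NormedAddCommGroup E] [NormedSpace ℝ E]

/-- Retractive sets in the sense of Bertsekas and Tseng: points of `S` far out in a direction close
to `y` stay in `S` when they are moved back by `y`. -/
def IsRetractive (S : Set E) : Prop :=
  ∀ y : E, ∀ᶠ x in asymptoticNhds ℝ E y, x ∈ S → x - y ∈ S

theorem eventually_asymptoticNhds_iff {y : E} {P : E → Prop} :
    (∀ᶠ x in asymptoticNhds ℝ E y, P x) ↔
      ∀ᶠ z : ℝ × E in atTop ×ˢ 𝓝 y, P (z.1 • z.2) := by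
  rw [asymptoticNhds_eq_smul, ← map₂_smul, ← map_prod_eq_map₂, eventually_map]

theorem IsRetractive.iInter {ι : Type*} [Finite ι] {S : ι → Set E}
    (hS : ∀ i, IsRetractive (S i)) : IsRetractive (⋂ i, S i) := fun y => by
  filter_upwards [eventually_all.2 fun i => hS i y] with x hx hxS
  exact Set.mem_iInter.2 fun i => hx i (Set.mem_iInter.1 hxS i)

theorem isRetractive_halfSpace (l : E →L[ℝ] ℝ) (β : ℝ) : IsRetractive {x | l x ≤ β} := fun y => by
  rcases le_or_gt 0 (l y) with hy | hy
  · refine Eventually.of_forall fun x (hx : l x ≤ β) => ?_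
    simp only [Set.mem_ofPred_eq, map_sub]
    linarith
  · have hbot : Tendsto (fun z : ℝ × E => z.1 * l z.2) (atTop ×ˢ 𝓝 y) atBot :=
      tendsto_fst.atTop_mul_neg hy ((l.continuous.tendsto y).comp tendsto_snd)
    refine eventually_asymptoticNhds_iff.2 ?_
    filter_upwards [hbot.eventually_le_atBot (β + l y)] with z hz _
    simp only [map_sub, map_smul, smul_eq_mul]
    linarith

theorem eventually_norm_sub_lt_norm {y : E} (hy : y ≠ 0) :
    ∀ᶠ x in asymptoticNhds ℝ E y, ‖x - y‖ < ‖x‖ := by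
  have hclose : ∀ᶠ w in 𝓝 y, ‖w - y‖ < ‖w‖ :=
    (continuous_id.sub continuous_const).norm.continuousAt.eventually_lt
      continuous_norm.continuousAt (by simpa using hy)
  refine eventually_asymptoticNhds_iff.2 ?_
  filter_upwards [tendsto_fst.eventually (eventually_ge_atTop 1),
    tendsto_snd.eventually hclose] with ⟨t, w⟩ (ht : 1 ≤ t) (hw : ‖w - y‖ < ‖w‖)
  calc ‖t • w - y‖ = ‖(t - 1) • w + (w - y)‖ := by congr 1; module
    _ ≤ (t - 1) * ‖w‖ + ‖w - y‖ := by
        simpa [norm_smul, abs_of_nonneg (sub_nonneg.2 ht)] using norm_add_le ((t - 1) • w) (w - y)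
    _ < (t - 1) * ‖w‖ + ‖w‖ := by gcongr
    _ = ‖t • w‖ := by rw [norm_smul, Real.norm_of_nonneg (by linarith)]; ring

end Retractive

section Existence

variable {E : Type*} [NormedAddCommGroup E]
  {β : Type*} [LinearOrder β] {S : Set E} {f : E → β}

theorem exists_norm_le_of_sublevel [ProperSpace E] (hS : IsClosed S)
    (hf : LowerSemicontinuousOn f S) {q : E} (hq : q ∈ S) :
    ∃ x ∈ S, f x ≤ f q ∧ ∀ z ∈ S, f z ≤ f x → ‖x‖ ≤ ‖z‖ := by
  have hclosed : IsClosed (S ∩ f ⁻¹' Set.Iic (f q)) := by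
    obtain ⟨v, hv, hSv⟩ := lowerSemicontinuousOn_iff_preimage_Iic.1 hf (f q)
    exact hSv ▸ hS.inter hv
  obtain ⟨x, ⟨hxS, hxq⟩, hdist⟩ := hclosed.exists_infDist_eq_dist ⟨q, hq, le_rfl⟩ 0
  refine ⟨x, hxS, hxq, fun z hz hzx => ?_⟩
  have hzdist := Metric.infDist_le_dist_of_mem (x := 0)
    (show z ∈ S ∩ f ⁻¹' Set.Iic (f q) from ⟨hz, hzx.trans hxq⟩)
  simpa only [hdist, dist_zero_left] using hzdist

/- If the norm-minimal points of the sublevel sets were unbounded, moving one of them back along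
their asymptotic direction would decrease its norm without increasing `f`. -/
theorem exists_isMinOn_of_eventually_sub_mem [NormedSpace ℝ E] [FiniteDimensional ℝ E]
    (hS : IsClosed S) (hne : S.Nonempty) (hf : LowerSemicontinuousOn f S)
    (hback : ∀ r, ∀ y ∈ asymptoticCone ℝ {x ∈ S | f x ≤ r}, y ≠ 0 →
      ∀ᶠ x in asymptoticNhds ℝ E y, x ∈ S → x - y ∈ S ∧ f (x - y) ≤ f x) :
    ∃ x ∈ S, IsMinOn f S x := by
  have : ProperSpace E := FiniteDimensional.proper_real E
  obtain ⟨x₀, hx₀⟩ := hne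
  let A := {x ∈ S | f x ≤ f x₀ ∧ ∀ z ∈ S, f z ≤ f x → ‖x‖ ≤ ‖z‖}
  have hA : A ⊆ {x ∈ S | f x ≤ f x₀} := fun x hx => ⟨hx.1, hx.2.1⟩
  have hAbdd : Bornology.IsBounded A := by
    by_contra hunbdd
    obtain ⟨y, hy0, hy⟩ := not_bounded_iff_exists_ne_zero_mem_asymptoticCone.1 hunbdd
    have hback_y := hback (f x₀) y (asymptoticCone_mono hA hy) hy0
    obtain ⟨x, ⟨hxS, _, hxmin⟩, hx_back, hx_norm⟩ :=
      (mem_asymptoticCone_iff.1 hy |>.and_eventually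
        (hback_y.and (eventually_norm_sub_lt_norm hy0))).exists
    exact (hxmin _ (hx_back hxS).1 (hx_back hxS).2).not_gt hx_norm
  obtain ⟨R, hR⟩ := hAbdd.subset_closedBall 0
  have hdom : ∀ q ∈ S, f q ≤ f x₀ → ∃ x ∈ S ∩ Metric.closedBall 0 R, f x ≤ f q := fun q hq hq₀ => by
    obtain ⟨x, hxS, hxq, hxmin⟩ := exists_norm_le_of_sublevel hS hf hq
    exact ⟨x, ⟨hxS, hR ⟨hxS, hxq.trans hq₀, hxmin⟩⟩, hxq⟩
  obtain ⟨x₁, hx₁, hx₁₀⟩ := hdom x₀ hx₀ le_rfl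
  obtain ⟨x, hx, hxmin⟩ := LowerSemicontinuousOn.exists_isMinOn ⟨x₁, hx₁⟩
    ((isCompact_closedBall 0 R).inter_left hS) (hf.mono Set.inter_subset_left)
  refine ⟨x, hx.1, fun q hq => ?_⟩
  rcases le_total (f q) (f x₀) with hq₀ | hq₀
  · obtain ⟨z, hz, hzq⟩ := hdom q hq hq₀
    exact (hxmin hz : f x ≤ f z).trans hzq
  · exact (hxmin hx₁ : f x ≤ f x₁).trans (hx₁₀.trans hq₀)

end Existence

section Polyhedron

variable {E : Type*} [NormedAddCommGroup E] [InnerProductSpace ℝ E] {ι : Type*}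

/-- The intersection of the half-spaces `⟪a i, x⟫ ≤ β i`, a polyhedral set when `ι` is finite. -/
def polyhedron (a : ι → E) (β : ι → ℝ) : Set E :=
  {x | ∀ i, ⟪a i, x⟫ ≤ β i}

theorem polyhedron_eq_iInter (a : ι → E) (β : ι → ℝ) :
    polyhedron a β = ⋂ i, {x | innerSL ℝ (a i) x ≤ β i} := by
  ext x
  simp [polyhedron]

theorem isClosed_polyhedron (a : ι → E) (β : ι → ℝ) : IsClosed (polyhedron a β) := by
  rw [polyhedron_eq_iInter]
  exact isClosed_iInter fun i => isClosed_le (by fun_prop) continuous_const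

theorem convex_polyhedron (a : ι → E) (β : ι → ℝ) : Convex ℝ (polyhedron a β) := by
  rw [polyhedron_eq_iInter]
  exact convex_iInter fun i => convex_halfSpace_le (innerSL ℝ (a i)).isLinear (β i)

theorem isRetractive_polyhedron [Finite ι] (a : ι → E) (β : ι → ℝ) :
    IsRetractive (polyhedron a β) := by
  rw [polyhedron_eq_iInter]
  exact IsRetractive.iInter fun i => isRetractive_halfSpace _ _

end Polyhedron

section Quadratic

variable {E : Type*} [NormedAddCommGroup E] [InnerProductSpace ℝ E] {c : E →ₗ[ℝ] E}

theorem convexOn_inner_map_self (hc : c.IsPositive) :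
    ConvexOn ℝ Set.univ fun x => ⟪x, c x⟫ := by
  refine ⟨convex_univ, fun x _ y _ s t hs ht hst => ?_⟩
  have hsymm : ⟪y, c x⟫ = ⟪x, c y⟫ := by rw [real_inner_comm, hc.isSymmetric x y]
  have hgap : s * ⟪x, c x⟫ + t * ⟪y, c y⟫ - ⟪s • x + t • y, c (s • x + t • y)⟫ =
      s * t * ⟪x - y, c (x - y)⟫ := by
    obtain rfl : t = 1 - s := by linarith
    simp only [map_add, map_sub, map_smul, inner_add_left, inner_add_right, inner_sub_left,
      inner_sub_right, real_inner_smul_left, real_inner_smul_right, hsymm]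
    ring
  have hnonneg : 0 ≤ s * t * ⟪x - y, c (x - y)⟫ :=
    mul_nonneg (mul_nonneg hs ht) (hc.inner_nonneg_right _)
  simp only [smul_eq_mul]
  linarith

theorem map_eq_zero_of_inner_map_self_nonpos (hc : c.IsPositive) {y : E} (hy : ⟪y, c y⟫ ≤ 0) :
    c y = 0 := by
  let B : LinearMap.BilinForm ℝ E := (innerₗ E).comp c
  have hnonneg : ∀ x, 0 ≤ B x x := hc.inner_nonneg_left
  have hsymm : LinearMap.IsSymm B := ⟨fun x z => by
    simpa [B, real_inner_comm] using hc.isSymmetric x z⟩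
  have hByy : B y y = 0 := le_antisymm ((real_inner_comm _ _).trans_le hy) (hnonneg y)
  have hker := (B.apply_apply_same_eq_zero_iff hnonneg hsymm).1 hByy
  exact inner_self_eq_zero.1 (DFunLike.congr_fun (LinearMap.mem_ker.1 hker) (c y))

end Quadratic

section PowUtility

/-- The normalized power utility `x ↦ p⁻¹ ((1 + x)₊ ^ p - 1)` of the relative gain `x`. -/
noncomputable def powUtility (p x : ℝ) : ℝ :=
  p⁻¹ * (max (1 + x) 0) ^ p - p⁻¹

variable {p x : ℝ}

theorem powUtility_le_self (hp0 : 0 < p) (hp1 : p ≤ 1) (hx : -1 ≤ x) : powUtility p x ≤ x := by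
  rw [powUtility, max_eq_left (by linarith)]
  calc p⁻¹ * (1 + x) ^ p - p⁻¹ ≤ p⁻¹ * (1 + p * x) - p⁻¹ := by
        gcongr
        exact rpow_one_add_le_one_add_mul_self hx hp0.le hp1
    _ = x := by field_simp; ring

/- Bernoulli's inequality for the exponent `1 - p` bounds `(1 + x) ^ (1 - p)` from above, hence
`(1 + x) ^ p = (1 + x) / (1 + x) ^ (1 - p)` from below. -/
theorem one_add_mul_sub_sq_le_rpow_one_add (hp0 : 0 < p) (hp1 : p ≤ 1) (hx : -1 ≤ x) :
    1 + p * x - (1 - p) * x ^ 2 ≤ (1 + x) ^ p := by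
  rcases hx.eq_or_lt with rfl | hx'
  · rw [add_neg_cancel, Real.zero_rpow hp0.ne']
    linarith
  · have hbern : (1 + x) ^ (1 - p) ≤ 1 + (1 - p) * x :=
      rpow_one_add_le_one_add_mul_self hx (by linarith) (by linarith)
    have hden : p ≤ 1 + (1 - p) * x := by nlinarith
    have hgap : 0 ≤ (1 - p) * x ^ 2 * (1 + (1 - p) * x - p) :=
      mul_nonneg (mul_nonneg (by linarith) (sq_nonneg x)) (by linarith)
    refine le_of_mul_le_mul_right ?_ (hp0.trans_le hden)
    calc (1 + p * x - (1 - p) * x ^ 2) * (1 + (1 - p) * x) ≤ 1 + x := by linarith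
      _ = (1 + x) ^ p * (1 + x) ^ (1 - p) := by
          rw [← Real.rpow_add (by linarith), add_sub_cancel, Real.rpow_one]
      _ ≤ (1 + x) ^ p * (1 + (1 - p) * x) :=
          mul_le_mul_of_nonneg_left hbern (Real.rpow_nonneg (by linarith) p)

theorem sub_mul_sq_le_powUtility (hp0 : 0 < p) (hp1 : p ≤ 1) (hx : -1 ≤ x) :
    x - (1 - p) / p * x ^ 2 ≤ powUtility p x := by
  rw [powUtility, max_eq_left (by linarith)]
  calc x - (1 - p) / p * x ^ 2 = p⁻¹ * (1 + p * x - (1 - p) * x ^ 2) - p⁻¹ := by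
        field_simp; ring
    _ ≤ p⁻¹ * (1 + x) ^ p - p⁻¹ := by
        gcongr
        exact one_add_mul_sub_sq_le_rpow_one_add hp0 hp1 hx

theorem powUtility_le_rpow (hp0 : 0 < p) (hp1 : p ≤ 1) {r : ℝ} (hr : 0 ≤ r) (hx : x ≤ r) :
    powUtility p x ≤ p⁻¹ * r ^ p := by
  have hsubadd : (max (1 + x) 0) ^ p ≤ 1 + r ^ p := by
    calc (max (1 + x) 0) ^ p ≤ (1 + r) ^ p := by
          gcongr
          exact max_le (by linarith) (by linarith)
      _ ≤ 1 ^ p + r ^ p := Real.rpow_add_le_add_rpow zero_le_one hr hp0.le hp1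
      _ = 1 + r ^ p := by rw [Real.one_rpow]
  calc powUtility p x ≤ p⁻¹ * (1 + r ^ p) - p⁻¹ := by unfold powUtility; gcongr
    _ = p⁻¹ * r ^ p := by ring

theorem neg_inv_le_powUtility (hp0 : 0 ≤ p) : -p⁻¹ ≤ powUtility p x := by
  have : 0 ≤ p⁻¹ * (max (1 + x) 0) ^ p := by positivity
  unfold powUtility
  linarith

theorem continuous_powUtility (hp0 : 0 ≤ p) : Continuous (powUtility p) := by
  unfold powUtility
  have : Continuous fun x : ℝ => (max (1 + x) 0) ^ p :=
    (by fun_prop : Continuous fun x : ℝ => max (1 + x) 0).rpow_const fun _ => Or.inr hp0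
  fun_prop

theorem concaveOn_powUtility (hp0 : 0 ≤ p) (hp1 : p ≤ 1) :
    ConcaveOn ℝ (Set.Ici (-1)) (powUtility p) := by
  refine ⟨convex_Ici _, fun x hx y hy s t hs ht hst => ?_⟩
  have hx' : 0 ≤ 1 + x := by linarith [Set.mem_Ici.1 hx]
  have hy' : 0 ≤ 1 + y := by linarith [Set.mem_Ici.1 hy]
  have hconc := (Real.concaveOn_rpow hp0 hp1).2 hx' hy' hs ht hst
  have hmid : s • (1 + x) + t • (1 + y) = 1 + (s • x + t • y) := by
    simp only [smul_eq_mul]; linear_combination hst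
  have hmid' : 0 ≤ 1 + (s • x + t • y) := by rw [← hmid]; positivity
  rw [hmid] at hconc
  simp only [powUtility, max_eq_left hx', max_eq_left hy', max_eq_left hmid']
  calc s • (p⁻¹ * (1 + x) ^ p - p⁻¹) + t • (p⁻¹ * (1 + y) ^ p - p⁻¹)
      = p⁻¹ * (s • (1 + x) ^ p + t • (1 + y) ^ p) - p⁻¹ := by
        simp only [smul_eq_mul]; linear_combination -p⁻¹ * hst
    _ ≤ p⁻¹ * (1 + (s • x + t • y)) ^ p - p⁻¹ := by gcongr

theorem tendsto_inv_mul_rpow_atTop (hp1 : p < 1) :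
    Tendsto (fun t : ℝ => t⁻¹ * t ^ p) atTop (𝓝 0) := by
  refine (tendsto_rpow_neg_atTop (sub_pos.2 hp1)).congr' ?_
  filter_upwards [eventually_gt_atTop 0] with t ht
  rw [← Real.rpow_neg_one, ← Real.rpow_add ht]
  ring_nf

theorem tendsto_inv_mul_powUtility_atTop (hp0 : 0 < p) (hp1 : p < 1) (x : ℝ) :
    Tendsto (fun t : ℝ => t⁻¹ * powUtility p (t * x)) atTop (𝓝 0) := by
  have hlower : Tendsto (fun t : ℝ => t⁻¹ * -p⁻¹) atTop (𝓝 0) := by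
    simpa using tendsto_inv_atTop_zero.mul_const (-p⁻¹)
  have hupper : Tendsto (fun t : ℝ => t⁻¹ * t ^ p * (p⁻¹ * |x| ^ p)) atTop (𝓝 0) := by
    simpa using (tendsto_inv_mul_rpow_atTop hp1).mul_const (p⁻¹ * |x| ^ p)
  refine tendsto_of_tendsto_of_tendsto_of_le_of_le' hlower hupper ?_ ?_ <;>
    filter_upwards [eventually_gt_atTop 0] with t ht
  · gcongr
    exact neg_inv_le_powUtility hp0.le
  · calc t⁻¹ * powUtility p (t * x) ≤ t⁻¹ * (p⁻¹ * (t * |x|) ^ p) := by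
          gcongr
          exact powUtility_le_rpow hp0 hp1.le (by positivity) (by gcongr; exact le_abs_self x)
      _ = t⁻¹ * t ^ p * (p⁻¹ * |x| ^ p) := by
          rw [Real.mul_rpow ht.le (abs_nonneg x)]; ring

theorem tendsto_inv_mul_add_rpow_atTop (hp1 : p < 1) (r B K : ℝ) :
    Tendsto (fun t : ℝ => t⁻¹ * r + B + t⁻¹ * t ^ p * K) atTop (𝓝 B) := by
  simpa using ((tendsto_inv_atTop_zero.mul_const r).add_const B).add
    ((tendsto_inv_mul_rpow_atTop hp1).mul_const K)

end PowUtility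

section LevyWeight

variable {E : Type*} [NormedAddCommGroup E] {p : ℝ} {u : E}

/-- The weight `min (‖u‖ ^ 2) (‖u‖ ^ p)`. For `0 ≤ p ≤ 2` it equals `‖u‖ ^ 2` on the unit ball and
`‖u‖ ^ p` outside, so a measure integrates it iff it integrates both `min (‖u‖ ^ 2) 1` and the
`p`-th power of the large jumps. -/
noncomputable def levyWeight (p : ℝ) (u : E) : ℝ :=
  min (‖u‖ ^ 2) (‖u‖ ^ p)

theorem levyWeight_nonneg : 0 ≤ levyWeight p u := by
  unfold levyWeight
  positivity

theorem levyWeight_of_norm_le_one (hp0 : 0 ≤ p) (hp2 : p ≤ 2) (hu : ‖u‖ ≤ 1) :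
    levyWeight p u = ‖u‖ ^ 2 := by
  refine min_eq_left ?_
  rw [← Real.rpow_two]
  exact Real.rpow_le_rpow_of_exponent_ge' (norm_nonneg u) hu hp0 hp2

theorem levyWeight_of_one_lt_norm (hp2 : p ≤ 2) (hu : 1 < ‖u‖) : levyWeight p u = ‖u‖ ^ p := by
  refine min_eq_right ?_
  rw [← Real.rpow_two]
  exact Real.rpow_le_rpow_of_exponent_le hu.le hp2

theorem integrable_levyWeight [MeasurableSpace E] [OpensMeasurableSpace E] {F : Measure E}
    (hp0 : 0 ≤ p) (hp2 : p ≤ 2)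
    (hsmall : ∫⁻ u, ENNReal.ofReal (min (‖u‖ ^ 2) 1) ∂F ≠ ⊤)
    (hlarge : ∫⁻ u in {u | 1 < ‖u‖}, ENNReal.ofReal (‖u‖ ^ p) ∂F ≠ ⊤) :
    Integrable (levyWeight p) F := by
  have hmeas : MeasurableSet {u : E | 1 < ‖u‖} :=
    measurableSet_lt measurable_const measurable_norm
  have hsmall' : Integrable (fun u : E => min (‖u‖ ^ 2) 1) F :=
    (lintegral_ofReal_ne_top_iff_integrable (Measurable.aestronglyMeasurable (by fun_prop))
      (ae_of_all _ fun u => by positivity)).1 hsmall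
  have hlarge' : Integrable ({u : E | 1 < ‖u‖}.indicator fun u => ‖u‖ ^ p) F :=
    (integrable_indicator_iff hmeas).2 <| (lintegral_ofReal_ne_top_iff_integrable
      (Measurable.aestronglyMeasurable (by fun_prop)) (ae_of_all _ fun u => by positivity)).1 hlarge
  refine (hsmall'.add hlarge').mono' (Measurable.aestronglyMeasurable ?_) (ae_of_all _ fun u => ?_)
  · unfold levyWeight
    fun_prop
  · rw [Real.norm_of_nonneg levyWeight_nonneg, Pi.add_apply]
    rcases le_or_gt ‖u‖ 1 with hu | hu
    · rw [levyWeight_of_norm_le_one hp0 hp2 hu, min_eq_left (pow_le_one₀ (norm_nonneg u) hu),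
        Set.indicator_of_notMem (by simpa using hu), add_zero]
    · rw [levyWeight_of_one_lt_norm hp2 hu, Set.indicator_of_mem (by simpa using hu)]
      exact le_add_of_nonneg_left (by positivity)

end LevyWeight

section Budget

variable {E : Type*} [NormedAddCommGroup E] [InnerProductSpace ℝ E] [MeasurableSpace E]
  {F : Measure E} {π y : E}

/-- The budget-constraint set `C₀`: portfolios that almost surely lose at most the whole wealth in
a jump. -/
def budgetSet (F : Measure E) : Set E :=
  {π | F {u | 1 + ⟪π, u⟫ < 0} = 0}

/-- The portfolios `π` with `F (Λ₋ π) = 0`, `c π = 0` and `∫_{‖u‖ ≤ 1} ⟪π, u⟫ dF ≤ ⟪π, b⟫`. As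
`⟪π, ·⟫ ≥ 0` holds `F`-a.e., the integral is the lower Lebesgue integral of the positive part. -/
def lossFreeCone (F : Measure E) (b : E) (c : E →ₗ[ℝ] E) : Set E :=
  {π | F {u | ⟪π, u⟫ < 0} = 0 ∧ c π = 0 ∧
    ((∫⁻ u in {u : E | ‖u‖ ≤ 1}, ENNReal.ofReal ⟪π, u⟫ ∂F : ℝ≥0∞) : EReal) ≤ (⟪π, b⟫ : ℝ)}

/-- The null-investment set `N`: adding one of its elements to a portfolio has no effect on the
resulting gains. -/
def nullInvestments (F : Measure E) (b : E) (c : E →ₗ[ℝ] E) : Set E :=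
  {π | c π = 0 ∧ F {u | ⟪π, u⟫ ≠ 0} = 0 ∧ ⟪π, b⟫ = 0}

theorem mem_budgetSet_iff : π ∈ budgetSet F ↔ ∀ᵐ u ∂F, -1 ≤ ⟪π, u⟫ := by
  simp only [ae_iff, not_le, budgetSet, Set.mem_ofPred_eq, ← lt_neg_iff_add_neg']

theorem zero_mem_budgetSet : (0 : E) ∈ budgetSet F :=
  mem_budgetSet_iff.2 (by simp)

theorem convex_budgetSet : Convex ℝ (budgetSet F) := by
  intro x hx z hz s t hs ht hst
  rw [mem_budgetSet_iff] at *
  filter_upwards [hx, hz] with u hxu hzu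
  simpa [inner_add_left, real_inner_smul_left] using
    (convex_Ici (-1 : ℝ)) hxu hzu hs ht hst

theorem isClosed_budgetSet : IsClosed (budgetSet F) := by
  refine IsSeqClosed.isClosed fun x π hx hlim => ?_
  have hall : ∀ᵐ u ∂F, ∀ k, -1 ≤ ⟪x k, u⟫ := ae_all_iff.2 fun k => mem_budgetSet_iff.1 (hx k)
  rw [mem_budgetSet_iff]
  filter_upwards [hall] with u hu
  exact ge_of_tendsto' (hlim.inner tendsto_const_nhds) hu

theorem sub_mem_budgetSet_iff (hy : ∀ᵐ u ∂F, ⟪y, u⟫ = 0) :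
    π - y ∈ budgetSet F ↔ π ∈ budgetSet F := by
  simp only [mem_budgetSet_iff]
  refine eventually_congr ?_
  filter_upwards [hy] with u hu
  rw [inner_sub_left, hu, sub_zero]

theorem measure_inner_neg_eq_zero_of_ray_mem_budgetSet
    (hray : ∀ t : ℝ, 0 ≤ t → t • y ∈ budgetSet F) : F {u | ⟪y, u⟫ < 0} = 0 := by
  have hall : ∀ᵐ u ∂F, ∀ k : ℕ, -1 ≤ ⟪(k : ℝ) • y, u⟫ :=
    ae_all_iff.2 fun k => mem_budgetSet_iff.1 (hray k k.cast_nonneg)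
  suffices ∀ᵐ u ∂F, 0 ≤ ⟪y, u⟫ by simpa only [ae_iff, not_le] using this
  filter_upwards [hall] with u hu
  by_contra! hneg
  obtain ⟨k, hk⟩ := exists_lt_nsmul (neg_pos.2 hneg) 1
  have := hu k
  rw [real_inner_smul_left] at this
  rw [nsmul_eq_mul] at hk
  linarith

end Budget

section JumpIntegrand

variable {E : Type*} [NormedAddCommGroup E] [InnerProductSpace ℝ E] {p : ℝ} {π u : E}

/-- The integrand of `ψ`: the power utility of the jump `⟪π, u⟫`, compensated on the unit ball. -/
noncomputable def jumpIntegrand (p : ℝ) (π u : E) : ℝ :=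
  powUtility p ⟪π, u⟫ - {u : E | ‖u‖ ≤ 1}.indicator (fun u => ⟪π, u⟫) u

theorem jumpIntegrand_of_norm_le_one (hu : ‖u‖ ≤ 1) :
    jumpIntegrand p π u = powUtility p ⟪π, u⟫ - ⟪π, u⟫ := by
  rw [jumpIntegrand, Set.indicator_of_mem (by exact hu)]

theorem jumpIntegrand_of_one_lt_norm (hu : 1 < ‖u‖) :
    jumpIntegrand p π u = powUtility p ⟪π, u⟫ := by
  rw [jumpIntegrand, Set.indicator_of_notMem (by simpa using hu), sub_zero]

theorem jumpIntegrand_le (hp0 : 0 < p) (hp1 : p ≤ 1) {R : ℝ} (hπ : ‖π‖ ≤ R)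
    (hu : -1 ≤ ⟪π, u⟫) : jumpIntegrand p π u ≤ p⁻¹ * R ^ p * levyWeight p u := by
  have hR : 0 ≤ R := (norm_nonneg π).trans hπ
  rcases le_or_gt ‖u‖ 1 with hu1 | hu1
  · rw [jumpIntegrand_of_norm_le_one hu1]
    have hweight : 0 ≤ p⁻¹ * R ^ p * levyWeight p u := mul_nonneg (by positivity) levyWeight_nonneg
    linarith [powUtility_le_self hp0 hp1 hu]
  · have hinner : ⟪π, u⟫ ≤ R * ‖u‖ := (real_inner_le_norm π u).trans (by gcongr)
    rw [jumpIntegrand_of_one_lt_norm hu1, levyWeight_of_one_lt_norm (by linarith) hu1, mul_assoc,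
      ← Real.mul_rpow hR (norm_nonneg u)]
    exact powUtility_le_rpow hp0 hp1 (by positivity) hinner

theorem neg_mul_levyWeight_le_jumpIntegrand (hp0 : 0 < p) (hp1 : p ≤ 1) {R : ℝ} (hπ : ‖π‖ ≤ R)
    (hu : -1 ≤ ⟪π, u⟫) :
    -(((1 - p) / p * R ^ 2 + p⁻¹) * levyWeight p u) ≤ jumpIntegrand p π u := by
  have hcoef : 0 ≤ (1 - p) / p := div_nonneg (by linarith) hp0.le
  rcases le_or_gt ‖u‖ 1 with hu1 | hu1
  · have hsq : ⟪π, u⟫ ^ 2 ≤ R ^ 2 * ‖u‖ ^ 2 := by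
      rw [← mul_pow]
      exact sq_le_sq.2 ((abs_real_inner_le_norm π u).trans
        ((by gcongr : ‖π‖ * ‖u‖ ≤ R * ‖u‖).trans (le_abs_self _)))
    have hquad : (1 - p) / p * ⟪π, u⟫ ^ 2 ≤ (1 - p) / p * (R ^ 2 * ‖u‖ ^ 2) :=
      mul_le_mul_of_nonneg_left hsq hcoef
    have hpos : 0 ≤ p⁻¹ * ‖u‖ ^ 2 := by positivity
    rw [jumpIntegrand_of_norm_le_one hu1, levyWeight_of_norm_le_one hp0.le (by linarith) hu1]
    linarith [sub_mul_sq_le_powUtility hp0 hp1 hu]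
  · have hone : 1 ≤ ‖u‖ ^ p := Real.one_le_rpow hu1.le hp0.le
    rw [jumpIntegrand_of_one_lt_norm hu1, levyWeight_of_one_lt_norm (by linarith) hu1]
    calc -(((1 - p) / p * R ^ 2 + p⁻¹) * ‖u‖ ^ p) ≤ -((0 + p⁻¹) * 1) := by gcongr; positivity
      _ ≤ powUtility p ⟪π, u⟫ := by simpa using neg_inv_le_powUtility hp0.le

theorem exists_norm_jumpIntegrand_le (hp0 : 0 < p) (hp1 : p ≤ 1) (R : ℝ) :
    ∃ K, ∀ π u : E, ‖π‖ ≤ R → -1 ≤ ⟪π, u⟫ → ‖jumpIntegrand p π u‖ ≤ K * levyWeight p u := by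
  refine ⟨max (p⁻¹ * R ^ p) ((1 - p) / p * R ^ 2 + p⁻¹), fun π u hπ hu => abs_le'.2 ⟨?_, ?_⟩⟩
  · exact (jumpIntegrand_le hp0 hp1 hπ hu).trans
      (mul_le_mul_of_nonneg_right (le_max_left _ _) levyWeight_nonneg)
  · exact (neg_le.1 (neg_mul_levyWeight_le_jumpIntegrand hp0 hp1 hπ hu)).trans
      (mul_le_mul_of_nonneg_right (le_max_right _ _) levyWeight_nonneg)

theorem continuous_jumpIntegrand_left (hp0 : 0 ≤ p) (u : E) :
    Continuous fun π => jumpIntegrand p π u := by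
  have hutil := continuous_powUtility hp0
  rcases le_or_gt ‖u‖ 1 with hu | hu
  · simp only [jumpIntegrand_of_norm_le_one hu]
    fun_prop
  · simp only [jumpIntegrand_of_one_lt_norm hu]
    fun_prop

theorem convexCombo_jumpIntegrand_le (hp0 : 0 ≤ p) (hp1 : p ≤ 1) {π₁ π₂ : E}
    (h₁ : -1 ≤ ⟪π₁, u⟫) (h₂ : -1 ≤ ⟪π₂, u⟫) {s t : ℝ} (hs : 0 ≤ s) (ht : 0 ≤ t) (hst : s + t = 1) :
    s * jumpIntegrand p π₁ u + t * jumpIntegrand p π₂ u ≤ jumpIntegrand p (s • π₁ + t • π₂) u := by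
  have hinner : ⟪s • π₁ + t • π₂, u⟫ = s * ⟪π₁, u⟫ + t * ⟪π₂, u⟫ := by
    rw [inner_add_left, real_inner_smul_left, real_inner_smul_left]
  have hconc := (concaveOn_powUtility hp0 hp1).2 h₁ h₂ hs ht hst
  simp only [smul_eq_mul] at hconc
  rcases le_or_gt ‖u‖ 1 with hu | hu
  · simp only [jumpIntegrand_of_norm_le_one hu, hinner]
    linarith
  · simpa only [jumpIntegrand_of_one_lt_norm hu, hinner] using hconc

variable [MeasurableSpace E] [OpensMeasurableSpace E]

theorem measurable_jumpIntegrand (p : ℝ) (π : E) : Measurable (jumpIntegrand p π) := by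
  have hinner : Measurable fun u : E => ⟪π, u⟫ :=
    (continuous_const.inner continuous_id).measurable
  have hball : MeasurableSet {u : E | ‖u‖ ≤ 1} :=
    measurableSet_le measurable_norm measurable_const
  unfold jumpIntegrand powUtility
  have := hinner.indicator hball
  fun_prop

variable {F : Measure E}

theorem integrable_jumpIntegrand (hp0 : 0 < p) (hp1 : p ≤ 1) (hF : Integrable (levyWeight p) F)
    (hπ : π ∈ budgetSet F) : Integrable (jumpIntegrand p π) F := by
  obtain ⟨K, hK⟩ := exists_norm_jumpIntegrand_le (E := E) hp0 hp1 ‖π‖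
  refine (hF.const_mul K).mono' (measurable_jumpIntegrand p π).aestronglyMeasurable ?_
  filter_upwards [mem_budgetSet_iff.1 hπ] with u hu
  exact hK π u le_rfl hu

theorem concaveOn_integral_jumpIntegrand (hp0 : 0 < p) (hp1 : p ≤ 1)
    (hF : Integrable (levyWeight p) F) :
    ConcaveOn ℝ (budgetSet F) fun π => ∫ u, jumpIntegrand p π u ∂F := by
  refine ⟨convex_budgetSet, fun π₁ h₁ π₂ h₂ s t hs ht hst => ?_⟩
  have hint₁ := (integrable_jumpIntegrand hp0 hp1 hF h₁).const_mul s
  have hint₂ := (integrable_jumpIntegrand hp0 hp1 hF h₂).const_mul t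
  simp only [smul_eq_mul, ← integral_const_mul]
  rw [← integral_add hint₁ hint₂]
  refine integral_mono_ae (hint₁.add hint₂)
    (integrable_jumpIntegrand hp0 hp1 hF (convex_budgetSet h₁ h₂ hs ht hst)) ?_
  filter_upwards [mem_budgetSet_iff.1 h₁, mem_budgetSet_iff.1 h₂] with u hu₁ hu₂
  exact convexCombo_jumpIntegrand_le hp0.le hp1 hu₁ hu₂ hs ht hst

theorem continuousOn_integral_jumpIntegrand (hp0 : 0 < p) (hp1 : p ≤ 1)
    (hF : Integrable (levyWeight p) F) :
    ContinuousOn (fun π => ∫ u, jumpIntegrand p π u ∂F) (budgetSet F) := by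
  intro π _
  obtain ⟨K, hK⟩ := exists_norm_jumpIntegrand_le (E := E) hp0 hp1 (‖π‖ + 1)
  have hball : Metric.ball π 1 ∈ 𝓝[budgetSet F] π :=
    mem_nhdsWithin_of_mem_nhds (Metric.ball_mem_nhds π one_pos)
  refine continuousWithinAt_of_dominated
    (Eventually.of_forall fun x => (measurable_jumpIntegrand p x).aestronglyMeasurable)
    ?_ (hF.const_mul K)
    (ae_of_all _ fun u => (continuous_jumpIntegrand_left hp0.le u).continuousWithinAt)
  filter_upwards [hball, self_mem_nhdsWithin] with x hx hxF
  filter_upwards [mem_budgetSet_iff.1 hxF] with u hu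
  have hnorm : ‖x‖ ≤ ‖π‖ + 1 := by
    linarith [norm_sub_norm_le x π, mem_ball_iff_norm.1 hx]
  exact hK x u hnorm hu

end JumpIntegrand

section Objective

variable {E : Type*} [NormedAddCommGroup E] [InnerProductSpace ℝ E] [MeasurableSpace E]
  {p : ℝ} {F : Measure E} {b : E} {c : E →ₗ[ℝ] E} {y : E}

/-- The real-valued formula that defines `ψ` on the budget-constraint set. -/
noncomputable def psiReal (p : ℝ) (F : Measure E) (b : E) (c : E →ₗ[ℝ] E) (π : E) : ℝ :=
  -⟪π, b⟫ - ((p - 1) / 2) * ⟪π, c π⟫ - ∫ u, jumpIntegrand p π u ∂F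

theorem psiReal_zero : psiReal p F b c 0 = 0 := by
  simp [psiReal, jumpIntegrand, powUtility]

theorem psiReal_sub_of_mem_nullInvestments (hc : c.IsSymmetric)
    (hy : y ∈ nullInvestments F b c) (π : E) :
    psiReal p F b c (π - y) = psiReal p F b c π := by
  obtain ⟨hcy, hyF, hyb⟩ := hy
  have hquad : ⟪π - y, c (π - y)⟫ = ⟪π, c π⟫ := by
    rw [map_sub, hcy, sub_zero, inner_sub_left, ← hc y π, hcy, inner_zero_left, sub_zero]
  have hint : ∫ u, jumpIntegrand p (π - y) u ∂F = ∫ u, jumpIntegrand p π u ∂F := by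
    refine integral_congr_ae ?_
    filter_upwards [ae_iff.2 hyF] with u hu
    simp only [jumpIntegrand, Set.indicator_apply, inner_sub_left, hu, sub_zero]
  rw [psiReal, hquad, hint, inner_sub_left, hyb, sub_zero, psiReal]

variable [OpensMeasurableSpace E]

theorem convexOn_psiReal (hp0 : 0 < p) (hp1 : p ≤ 1) (hF : Integrable (levyWeight p) F)
    (hc : c.IsPositive) : ConvexOn ℝ (budgetSet F) (psiReal p F b c) := by
  have hlin : ConvexOn ℝ (budgetSet F) fun π => -⟪π, b⟫ := by
    refine ((-(innerₗ E b)).convexOn convex_budgetSet).congr fun π _ => ?_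
    rw [LinearMap.neg_apply, innerₗ_apply_apply, real_inner_comm]
  have hquad : ConvexOn ℝ (budgetSet F) fun π => (1 - p) / 2 * ⟪π, c π⟫ :=
    ((convexOn_inner_map_self hc).subset (Set.subset_univ _) convex_budgetSet).smul
      (by linarith : 0 ≤ (1 - p) / 2)
  refine ((hlin.add hquad).sub (concaveOn_integral_jumpIntegrand hp0 hp1 hF)).congr fun π _ => ?_
  simp only [Pi.add_apply, Pi.sub_apply, psiReal]
  ring

theorem continuousOn_psiReal [FiniteDimensional ℝ E] (hp0 : 0 < p) (hp1 : p ≤ 1)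
    (hF : Integrable (levyWeight p) F) : ContinuousOn (psiReal p F b c) (budgetSet F) := by
  have hcont : Continuous c := c.continuous_of_finiteDimensional
  have hsmooth : Continuous fun π => -⟪π, b⟫ - ((p - 1) / 2) * ⟪π, c π⟫ := by fun_prop
  exact hsmooth.continuousOn.sub (continuousOn_integral_jumpIntegrand hp0 hp1 hF)

end Objective

section JumpGap

variable {E : Type*} [NormedAddCommGroup E] [InnerProductSpace ℝ E] {p : ℝ} {π y u : E}

/-- The gap in the bound `jumpIntegrand_le`. It is nonnegative on the budget-constraint set, so
that Fatou's lemma applies to it. -/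
noncomputable def jumpGap (p : ℝ) (π u : E) : ℝ :=
  p⁻¹ * ‖π‖ ^ p * levyWeight p u - jumpIntegrand p π u

theorem jumpGap_nonneg (hp0 : 0 < p) (hp1 : p ≤ 1) (hu : -1 ≤ ⟪π, u⟫) : 0 ≤ jumpGap p π u :=
  sub_nonneg.2 (jumpIntegrand_le hp0 hp1 le_rfl hu)

theorem tendsto_inv_mul_jumpGap_smul (hp0 : 0 < p) (hp1 : p < 1) (y : E) (hu : ‖u‖ ≤ 1) :
    Tendsto (fun t : ℝ => t⁻¹ * jumpGap p (t • y) u) atTop (𝓝 ⟪y, u⟫) := by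
  have hweight := (tendsto_inv_mul_rpow_atTop hp1).mul_const (p⁻¹ * ‖y‖ ^ p * levyWeight p u)
  have hutil := tendsto_inv_mul_powUtility_atTop hp0 hp1 ⟪y, u⟫
  have hlim := (hweight.sub hutil).add_const ⟪y, u⟫
  rw [zero_mul, sub_zero, zero_add] at hlim
  refine hlim.congr' ?_
  filter_upwards [eventually_gt_atTop 0] with t ht
  rw [jumpGap, jumpIntegrand_of_norm_le_one hu, real_inner_smul_left, norm_smul,
    Real.norm_of_nonneg ht.le, Real.mul_rpow ht.le (norm_nonneg y)]
  field_simp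
  ring

variable [MeasurableSpace E] {F : Measure E}

theorem integral_inv_mul_jumpGap_smul_nonneg (hp0 : 0 < p) (hp1 : p ≤ 1) {t : ℝ} (ht : 0 ≤ t)
    (hy : t • y ∈ budgetSet F) : 0 ≤ ∫ u, t⁻¹ * jumpGap p (t • y) u ∂F := by
  refine integral_nonneg_of_ae ?_
  filter_upwards [mem_budgetSet_iff.1 hy] with u hu
  exact mul_nonneg (inv_nonneg.2 ht) (jumpGap_nonneg hp0 hp1 hu)

variable [OpensMeasurableSpace E] {b : E} {c : E →ₗ[ℝ] E}

theorem measurable_jumpGap (p : ℝ) (π : E) : Measurable (jumpGap p π) := by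
  have := measurable_jumpIntegrand p π
  unfold jumpGap levyWeight
  fun_prop

theorem integrable_jumpGap (hp0 : 0 < p) (hp1 : p ≤ 1) (hF : Integrable (levyWeight p) F)
    (hπ : π ∈ budgetSet F) : Integrable (jumpGap p π) F :=
  (hF.const_mul _).sub (integrable_jumpIntegrand hp0 hp1 hF hπ)

theorem integral_jumpGap (hp0 : 0 < p) (hp1 : p ≤ 1) (hF : Integrable (levyWeight p) F)
    (hπ : π ∈ budgetSet F) :
    ∫ u, jumpGap p π u ∂F = psiReal p F b c π + ⟪π, b⟫ - (1 - p) / 2 * ⟪π, c π⟫ +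
      p⁻¹ * ‖π‖ ^ p * ∫ u, levyWeight p u ∂F := by
  have hsub : ∫ u, jumpGap p π u ∂F =
      p⁻¹ * ‖π‖ ^ p * ∫ u, levyWeight p u ∂F - ∫ u, jumpIntegrand p π u ∂F := by
    rw [← integral_const_mul]
    exact integral_sub (hF.const_mul _) (integrable_jumpIntegrand hp0 hp1 hF hπ)
  rw [hsub, psiReal]
  ring

theorem integral_inv_mul_jumpGap_smul_le (hp0 : 0 < p) (hp1 : p ≤ 1)
    (hF : Integrable (levyWeight p) F) {r t : ℝ} (ht : 0 < t) (hy : t • y ∈ budgetSet F)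
    (hr : psiReal p F b c (t • y) ≤ r) :
    ∫ u, t⁻¹ * jumpGap p (t • y) u ∂F ≤
      t⁻¹ * r + ⟪y, b⟫ + t⁻¹ * t ^ p * (p⁻¹ * ‖y‖ ^ p * ∫ u, levyWeight p u ∂F) -
        t * ((1 - p) / 2 * ⟪y, c y⟫) := by
  rw [integral_const_mul, integral_jumpGap (b := b) (c := c) hp0 hp1 hF hy, map_smul,
    real_inner_smul_left, real_inner_smul_left, real_inner_smul_right, norm_smul,
    Real.norm_of_nonneg ht.le, Real.mul_rpow ht.le (norm_nonneg y)]
  have hr' : t⁻¹ * psiReal p F b c (t • y) ≤ t⁻¹ * r := by gcongr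
  have hcancel : t⁻¹ * t = 1 := inv_mul_cancel₀ ht.ne'
  linear_combination hr' + (⟪y, b⟫ - (1 - p) / 2 * t * ⟪y, c y⟫) * hcancel

theorem integral_inv_mul_jumpGap_smul_le_of_map_eq_zero (hp0 : 0 < p) (hp1 : p ≤ 1)
    (hF : Integrable (levyWeight p) F) {r t : ℝ} (ht : 0 < t) (hy : t • y ∈ budgetSet F)
    (hr : psiReal p F b c (t • y) ≤ r) (hcy : c y = 0) :
    ∫ u, t⁻¹ * jumpGap p (t • y) u ∂F ≤
      t⁻¹ * r + ⟪y, b⟫ + t⁻¹ * t ^ p * (p⁻¹ * ‖y‖ ^ p * ∫ u, levyWeight p u ∂F) := by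
  simpa only [hcy, inner_zero_right, mul_zero, sub_zero] using
    integral_inv_mul_jumpGap_smul_le hp0 hp1 hF ht hy hr

theorem lintegral_inv_mul_jumpGap_smul_le (hp0 : 0 < p) (hp1 : p ≤ 1)
    (hF : Integrable (levyWeight p) F) {r t : ℝ} (ht : 0 < t) (hy : t • y ∈ budgetSet F)
    (hr : psiReal p F b c (t • y) ≤ r) (hcy : c y = 0) :
    ∫⁻ u, ENNReal.ofReal (t⁻¹ * jumpGap p (t • y) u) ∂F ≤ ENNReal.ofReal
      (t⁻¹ * r + ⟪y, b⟫ + t⁻¹ * t ^ p * (p⁻¹ * ‖y‖ ^ p * ∫ u, levyWeight p u ∂F)) := by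
  have hnonneg : 0 ≤ᵐ[F] fun u => t⁻¹ * jumpGap p (t • y) u := by
    filter_upwards [mem_budgetSet_iff.1 hy] with u hu
    exact mul_nonneg (inv_nonneg.2 ht.le) (jumpGap_nonneg hp0 hp1 hu)
  rw [← ofReal_integral_eq_lintegral_ofReal
    ((integrable_jumpGap hp0 hp1 hF hy).const_mul t⁻¹) hnonneg]
  exact ENNReal.ofReal_le_ofReal
    (integral_inv_mul_jumpGap_smul_le_of_map_eq_zero hp0 hp1 hF ht hy hr hcy)

end JumpGap

section Recession

variable {E : Type*} [NormedAddCommGroup E] [InnerProductSpace ℝ E] [MeasurableSpace E]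
  [OpensMeasurableSpace E] {p : ℝ} {F : Measure E} {b : E} {c : E →ₗ[ℝ] E} {y : E} {r : ℝ}

theorem map_eq_zero_of_ray_psiReal_le (hp0 : 0 < p) (hp1 : p < 1)
    (hF : Integrable (levyWeight p) F) (hc : c.IsPositive)
    (hray : ∀ t : ℝ, 0 ≤ t → t • y ∈ budgetSet F ∧ psiReal p F b c (t • y) ≤ r) : c y = 0 := by
  refine map_eq_zero_of_inner_map_self_nonpos hc (not_lt.1 fun hpos => ?_)
  have hcoef : 0 < (1 - p) / 2 * ⟪y, c y⟫ := mul_pos (by linarith) hpos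
  have hbot : Tendsto (fun t : ℝ =>
      t⁻¹ * r + ⟪y, b⟫ + t⁻¹ * t ^ p * (p⁻¹ * ‖y‖ ^ p * ∫ u, levyWeight p u ∂F) -
        t * ((1 - p) / 2 * ⟪y, c y⟫)) atTop atBot := by
    simp only [sub_eq_add_neg _ (_ * _)]
    exact (tendsto_inv_mul_add_rpow_atTop hp1 _ _ _).add_atBot
      (tendsto_neg_atTop_atBot.comp (tendsto_id.atTop_mul_const hcoef))
  obtain ⟨t, hneg, ht⟩ := ((hbot.eventually_lt_atBot 0).and (eventually_gt_atTop 0)).exists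
  obtain ⟨hyt, hrt⟩ := hray t ht.le
  exact ((integral_inv_mul_jumpGap_smul_nonneg hp0 hp1.le ht.le hyt).trans
    (integral_inv_mul_jumpGap_smul_le hp0 hp1.le hF ht hyt hrt)).not_gt hneg

theorem inner_nonneg_of_ray_psiReal_le (hp0 : 0 < p) (hp1 : p < 1)
    (hF : Integrable (levyWeight p) F) (hcy : c y = 0)
    (hray : ∀ t : ℝ, 0 ≤ t → t • y ∈ budgetSet F ∧ psiReal p F b c (t • y) ≤ r) :
    0 ≤ ⟪y, b⟫ := by
  refine ge_of_tendsto (tendsto_inv_mul_add_rpow_atTop hp1 r ⟪y, b⟫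
    (p⁻¹ * ‖y‖ ^ p * ∫ u, levyWeight p u ∂F)) ?_
  filter_upwards [eventually_gt_atTop 0] with t ht
  obtain ⟨hyt, hrt⟩ := hray t ht.le
  exact (integral_inv_mul_jumpGap_smul_nonneg hp0 hp1.le ht.le hyt).trans
    (integral_inv_mul_jumpGap_smul_le_of_map_eq_zero hp0 hp1.le hF ht hyt hrt hcy)

theorem setLIntegral_inner_le_of_ray_psiReal_le (hp0 : 0 < p) (hp1 : p < 1)
    (hF : Integrable (levyWeight p) F) (hcy : c y = 0)
    (hray : ∀ t : ℝ, 0 ≤ t → t • y ∈ budgetSet F ∧ psiReal p F b c (t • y) ≤ r) :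
    ∫⁻ u in {u : E | ‖u‖ ≤ 1}, ENNReal.ofReal ⟪y, u⟫ ∂F ≤ ENNReal.ofReal ⟪y, b⟫ := by
  let gap : ℝ → E → ℝ≥0∞ := fun t u => ENNReal.ofReal (t⁻¹ * jumpGap p (t • y) u)
  have hmeas : ∀ t, AEMeasurable (gap t) (F.restrict {u : E | ‖u‖ ≤ 1}) := fun t =>
    ((measurable_jumpGap p (t • y)).const_mul t⁻¹).ennreal_ofReal.aemeasurable
  have hlim : ∀ u ∈ {u : E | ‖u‖ ≤ 1},
      liminf (fun t => gap t u) atTop = ENNReal.ofReal ⟪y, u⟫ := fun u hu =>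
    (ENNReal.tendsto_ofReal (tendsto_inv_mul_jumpGap_smul hp0 hp1 y hu)).liminf_eq
  have hball : MeasurableSet {u : E | ‖u‖ ≤ 1} := measurableSet_le measurable_norm measurable_const
  have hbound : ∀ᶠ t : ℝ in atTop, ∫⁻ u in {u : E | ‖u‖ ≤ 1}, gap t u ∂F ≤ ENNReal.ofReal
      (t⁻¹ * r + ⟪y, b⟫ + t⁻¹ * t ^ p * (p⁻¹ * ‖y‖ ^ p * ∫ u, levyWeight p u ∂F)) := by
    filter_upwards [eventually_gt_atTop 0] with t ht
    exact (setLIntegral_le_lintegral _ _).trans (lintegral_inv_mul_jumpGap_smul_le hp0 hp1.le hF ht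
      (hray t ht.le).1 (hray t ht.le).2 hcy)
  calc ∫⁻ u in {u : E | ‖u‖ ≤ 1}, ENNReal.ofReal ⟪y, u⟫ ∂F
      = ∫⁻ u in {u : E | ‖u‖ ≤ 1}, liminf (fun t => gap t u) atTop ∂F :=
        (setLIntegral_congr_fun hball hlim).symm
    _ ≤ liminf (fun t => ∫⁻ u in {u : E | ‖u‖ ≤ 1}, gap t u ∂F) atTop := lintegral_liminf_le' hmeas
    _ ≤ liminf (fun t : ℝ => ENNReal.ofReal (t⁻¹ * r + ⟪y, b⟫ +
          t⁻¹ * t ^ p * (p⁻¹ * ‖y‖ ^ p * ∫ u, levyWeight p u ∂F))) atTop := liminf_le_liminf hbound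
    _ = ENNReal.ofReal ⟪y, b⟫ :=
        (ENNReal.tendsto_ofReal (tendsto_inv_mul_add_rpow_atTop hp1 _ _ _)).liminf_eq

theorem mem_lossFreeCone_of_ray_psiReal_le (hp0 : 0 < p) (hp1 : p < 1)
    (hF : Integrable (levyWeight p) F) (hc : c.IsPositive)
    (hray : ∀ t : ℝ, 0 ≤ t → t • y ∈ budgetSet F ∧ psiReal p F b c (t • y) ≤ r) :
    y ∈ lossFreeCone F b c := by
  have hcy : c y = 0 := map_eq_zero_of_ray_psiReal_le hp0 hp1 hF hc hray
  refine ⟨measure_inner_neg_eq_zero_of_ray_mem_budgetSet fun t ht => (hray t ht).1, hcy, ?_⟩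
  calc ((∫⁻ u in {u : E | ‖u‖ ≤ 1}, ENNReal.ofReal ⟪y, u⟫ ∂F : ℝ≥0∞) : EReal)
      ≤ (ENNReal.ofReal ⟪y, b⟫ : EReal) := EReal.coe_ennreal_le_coe_ennreal_iff.2
        (setLIntegral_inner_le_of_ray_psiReal_le hp0 hp1 hF hcy hray)
    _ = (⟪y, b⟫ : ℝ) := by
        rw [EReal.coe_ennreal_ofReal,
          max_eq_left (inner_nonneg_of_ray_psiReal_le hp0 hp1 hF hcy hray)]

variable [FiniteDimensional ℝ E]

theorem mem_lossFreeCone_of_mem_asymptoticCone (hp0 : 0 < p) (hp1 : p < 1)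
    (hF : Integrable (levyWeight p) F) (hc : c.IsPositive)
    (hy : y ∈ asymptoticCone ℝ {x ∈ budgetSet F | psiReal p F b c x ≤ r}) :
    y ∈ lossFreeCone F b c := by
  let L := {x ∈ budgetSet F | psiReal p F b c x ≤ max r 0}
  have hzero : (0 : E) ∈ L := ⟨zero_mem_budgetSet, psiReal_zero.trans_le (le_max_right r 0)⟩
  have hconv : Convex ℝ L := (convexOn_psiReal hp0 hp1.le hF hc).convex_le _
  have hclosed : IsClosed L :=
    (continuousOn_psiReal hp0 hp1.le hF).preimage_isClosed_of_isClosed isClosed_budgetSet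
      isClosed_Iic
  have hsub : {x ∈ budgetSet F | psiReal p F b c x ≤ r} ⊆ L := fun x hx =>
    ⟨hx.1, hx.2.trans (le_max_left r 0)⟩
  refine mem_lossFreeCone_of_ray_psiReal_le (r := max r 0) hp0 hp1 hF hc fun t ht => ?_
  have hmem := hconv.smul_vadd_mem_of_isClosed_of_mem_asymptoticCone hclosed ht
    (asymptoticCone_mono hsub hy) hzero
  rwa [vadd_eq_add, add_zero] at hmem

theorem psi_attains_infimum_polyhedral_general (hp0 : 0 < p) (hp1 : p < 1)
    (hF : Integrable (levyWeight p) F) (hc : c.IsPositive) {C : Set E} (hCclosed : IsClosed C)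
    (hCretr : IsRetractive C) (hne : (C ∩ budgetSet F).Nonempty)
    (hrec : ∀ y ∈ lossFreeCone F b c ∩ asymptoticCone ℝ C, y ≠ 0 → y ∈ nullInvestments F b c) :
    ∃ π ∈ C ∩ budgetSet F, IsMinOn (psiReal p F b c) (C ∩ budgetSet F) π := by
  have hcont := (continuousOn_psiReal (b := b) (c := c) hp0 hp1.le hF).mono
    (Set.inter_subset_right (s := C))
  refine exists_isMinOn_of_eventually_sub_mem (hCclosed.inter isClosed_budgetSet) hne
    hcont.lowerSemicontinuousOn fun r y hy hy0 => ?_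
  have hsub : {x ∈ C ∩ budgetSet F | psiReal p F b c x ≤ r} ⊆
      {x ∈ budgetSet F | psiReal p F b c x ≤ r} := fun x hx => ⟨hx.1.2, hx.2⟩
  have hyC : y ∈ asymptoticCone ℝ C := asymptoticCone_mono (fun x hx => hx.1.1) hy
  have hyloss : y ∈ lossFreeCone F b c :=
    mem_lossFreeCone_of_mem_asymptoticCone hp0 hp1 hF hc (asymptoticCone_mono hsub hy)
  have hynull : y ∈ nullInvestments F b c := hrec y ⟨hyloss, hyC⟩ hy0
  filter_upwards [hCretr y] with x hxC hx
  exact ⟨⟨hxC hx.1, (sub_mem_budgetSet_iff (ae_iff.2 hynull.2.1)).2 hx.2⟩,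
    (psiReal_sub_of_mem_nullInvestments hc.isSymmetric hynull x).le⟩

end Recession

section Psi

variable {n : ℕ} {p : ℝ} {F : Measure (EuclideanSpace ℝ (Fin n))} {b π : EuclideanSpace ℝ (Fin n)}
  {c : EuclideanSpace ℝ (Fin n) →ₗ[ℝ] EuclideanSpace ℝ (Fin n)}

theorem psi_of_mem_budgetSet (hπ : π ∈ budgetSet F) : psi n p F b c π = psiReal p F b c π :=
  if_pos hπ

theorem psi_of_notMem_budgetSet (hπ : π ∉ budgetSet F) : psi n p F b c π = ⊤ :=
  if_neg hπ

theorem psi_le_of_isMinOn_psiReal {C : Set (EuclideanSpace ℝ (Fin n))} (hπ : π ∈ budgetSet F)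
    (hmin : IsMinOn (psiReal p F b c) (C ∩ budgetSet F) π) :
    ∀ q ∈ C, psi n p F b c π ≤ psi n p F b c q := fun q hq => by
  by_cases hqF : q ∈ budgetSet F
  · rw [psi_of_mem_budgetSet hπ, psi_of_mem_budgetSet hqF]
    exact EReal.coe_le_coe (hmin ⟨hq, hqF⟩)
  · exact psi_of_notMem_budgetSet hqF ▸ le_top

end Psi

/-- Let `C ⊆ ℝⁿ` be a polyhedral set containing `0` (an intersection of
finitely many half-spaces `⟨aᵢ,x⟩ ≤ βᵢ`), with recession cone
`rec(C) = {y | ∀ x ∈ C, ∀ t ≥ 0, x + t·y ∈ C}`. Suppose every nonzero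
`y ∈ {π | F(Λ₋(π)) = 0, cπ = 0, ∫_{|u|≤1} ⟨π,u⟩ dF ≤ ⟨π,b⟩} ∩ rec(C)` belongs to the
null-investment set `N`. Then `ψ` achieves its infimum over `C`: there is `π* ∈ C ∩ C₀` with
`ψ(π*) ≤ ψ(π)` for all `π ∈ C`. -/
theorem psi_attains_infimum_polyhedral
    (n : ℕ) (hn : 1 ≤ n) (p : ℝ) (hp0 : 0 < p) (hp1 : p < 1)
    (F : Measure (EuclideanSpace ℝ (Fin n)))
    (hF0 : F {(0 : EuclideanSpace ℝ (Fin n))} = 0)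
    (hFlevy : ∫⁻ u, ENNReal.ofReal (min (‖u‖ ^ (2 : ℕ)) 1) ∂F ≠ ⊤)
    (hAF : ∫⁻ u in {u : EuclideanSpace ℝ (Fin n) | 1 < ‖u‖}, ENNReal.ofReal (‖u‖ ^ p) ∂F ≠ ⊤)
    (b : EuclideanSpace ℝ (Fin n))
    (c : EuclideanSpace ℝ (Fin n) →ₗ[ℝ] EuclideanSpace ℝ (Fin n))
    (hcsymm : ∀ x y : EuclideanSpace ℝ (Fin n), ⟪c x, y⟫ = ⟪x, c y⟫)
    (hcpsd : ∀ x : EuclideanSpace ℝ (Fin n), 0 ≤ ⟪x, c x⟫)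
    (C : Set (EuclideanSpace ℝ (Fin n)))
    (m : ℕ) (a : Fin m → EuclideanSpace ℝ (Fin n)) (β : Fin m → ℝ)
    (hCpoly : C = {x : EuclideanSpace ℝ (Fin n) | ∀ i : Fin m, ⟪a i, x⟫ ≤ β i})
    (h0C : (0 : EuclideanSpace ℝ (Fin n)) ∈ C)
    (hrec : ∀ y : EuclideanSpace ℝ (Fin n), y ≠ 0 →
      y ∈ {π : EuclideanSpace ℝ (Fin n) |
          F {u : EuclideanSpace ℝ (Fin n) | ⟪π, u⟫ < 0} = 0 ∧ c π = 0 ∧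
          ((∫⁻ u in {u : EuclideanSpace ℝ (Fin n) | ‖u‖ ≤ 1},
              ENNReal.ofReal ⟪π, u⟫ ∂F : ℝ≥0∞) : EReal) ≤ ((⟪π, b⟫ : ℝ) : EReal)} ∩
        {y : EuclideanSpace ℝ (Fin n) | ∀ x ∈ C, ∀ t : ℝ, 0 ≤ t → x + t • y ∈ C} →
      (c y = 0 ∧ F {u : EuclideanSpace ℝ (Fin n) | ⟪y, u⟫ ≠ 0} = 0 ∧ ⟪y, b⟫ = 0)) :
    ∃ πs : EuclideanSpace ℝ (Fin n),
      πs ∈ C ∧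
      F {u : EuclideanSpace ℝ (Fin n) | 1 + ⟪πs, u⟫ < 0} = 0 ∧
      ∀ π ∈ C, psi n p F b c πs ≤ psi n p F b c π := by
  subst hCpoly
  have hF : Integrable (levyWeight p) F :=
    integrable_levyWeight hp0.le (by linarith) hFlevy hAF
  have hc : c.IsPositive := ⟨hcsymm, fun x => (hcpsd x).trans_eq (hcsymm x x).symm⟩
  have hCclosed : IsClosed (polyhedron a β) := isClosed_polyhedron a β
  obtain ⟨πs, ⟨hπC, hπF⟩, hmin⟩ := psi_attains_infimum_polyhedral_general hp0 hp1 hF hc hCclosed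
    (isRetractive_polyhedron a β) ⟨0, h0C, zero_mem_budgetSet⟩ fun y ⟨hyloss, hyC⟩ hy0 =>
      hrec y hy0 ⟨hyloss, fun x hx t ht => add_comm (t • y) x ▸
        (convex_polyhedron a β).smul_vadd_mem_of_isClosed_of_mem_asymptoticCone hCclosed ht hyC hx⟩
  exact ⟨πs, hπC, hπF, psi_le_of_isMinOn_psiReal hπF hmin⟩
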